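/- Exhaustive application of the pure literal rule is not symmetry-lifting: there exist CNF formulas F and F' such that F' is obtained from F by applying the pure rule exhaustively and some semantic symmetry of F', extended by the identity on Lit(F) ∖ Lit(F'), is not a semantic symmetry of F (witnessed by F = (x∨z)∧(ȳ∨z)∧(ȳ∨z̄)∧(y∨b)∧(y∨a)∧(y∨b)∧(ȳ∨ā∨b̄) with pure literal x, where after removing x the transposition exchanging z and z̄ is a syntactic and hence semantic symmetry of F', but is not a semantic symmetry of F). -/

import Mathlib

/-- A literal over a variable type `V`: a variable or its negation. -/
inductive Lit (V : Type) where
  | pos : V → Lit V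
  | neg : V → Lit V
deriving DecidableEq

variable {V : Type} [DecidableEq V]

/-- Negation of a literal (so that double negation is the identity). -/
def Lit.negate : Lit V → Lit V
  | .pos v => .neg v
  | .neg v => .pos v

/-- The underlying variable of a literal. -/
def Lit.var : Lit V → V
  | .pos v => v
  | .neg v => v

/-- A clause is a finite set of literals. -/
abbrev Clause (V : Type) := Finset (Lit V)

/-- A CNF formula is a finite set of clauses. -/
abbrev CNF (V : Type) := Finset (Clause V)

/-- `Var(F)`: the variables occurring in a formula. -/
def CNF.vars (F : CNF V) : Finset V := Finset.sup F (fun C => Finset.image Lit.var C)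

/-- `Lit(F) = Var(F) ∪ {v̄ : v ∈ Var(F)}`. -/
def CNF.lits (F : CNF V) : Finset (Lit V) :=
  Finset.image Lit.pos (CNF.vars F) ∪ Finset.image Lit.neg (CNF.vars F)

/-- The value of a literal under a complete assignment (given on the variables,
which determines a consistent complete assignment on all literals). -/
def Lit.val (σ : V → Bool) : Lit V → Bool
  | .pos v => σ v
  | .neg v => !(σ v)

/-- `C[σ]`: delete from `C` every literal mapped to `⊥` by `σ`
(i.e. keep `l` with `¬l ∉ σ`). -/
def Clause.reduce (σ : V → Bool) (C : Clause V) : Clause V :=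
  Finset.filter (fun l => Lit.val σ (Lit.negate l) = false) C

/-- `F[σ]`: delete every clause containing a literal mapped to `⊤` by `σ`
(for a complete assignment: every clause containing no false literal is kept)
and delete from each remaining clause every literal mapped to `⊥`. -/
def CNF.reduce (F : CNF V) (σ : V → Bool) : CNF V :=
  Finset.image (Clause.reduce σ) (Finset.filter (fun C => ∀ l ∈ C, Lit.val σ l = false) F)

/-- Apply a map on literals elementwise to clauses and formulas. -/
def CNF.map (φ : Lit V → Lit V) (F : CNF V) : CNF V :=
  Finset.image (fun C => Finset.image φ C) F

/-- `φ` is a syntactic symmetry of `F`: a bijection of `Lit(F)` respecting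
negation with `φ(F) = F`. -/
def IsSynSym (F : CNF V) (φ : Lit V → Lit V) : Prop :=
  Set.BijOn φ (CNF.lits F : Set (Lit V)) (CNF.lits F : Set (Lit V)) ∧
  (∀ l ∈ CNF.lits F, φ (Lit.negate l) = Lit.negate (φ l)) ∧
  CNF.map φ F = F

/-- `φ` is a semantic symmetry of `F`: a bijection of `Lit(F)` respecting
negation with `F[σ] = φ(F)[σ]` for every complete assignment `σ`. -/
def IsSemSym (F : CNF V) (φ : Lit V → Lit V) : Prop :=
  Set.BijOn φ (CNF.lits F : Set (Lit V)) (CNF.lits F : Set (Lit V)) ∧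
  (∀ l ∈ CNF.lits F, φ (Lit.negate l) = Lit.negate (φ l)) ∧
  ∀ σ : V → Bool, CNF.reduce F σ = CNF.reduce (CNF.map φ F) σ

/-- Extend a map defined on the literal set `S` by the identity outside `S`. -/
def extendId (S : Finset (Lit V)) (φ : Lit V → Lit V) : Lit V → Lit V :=
  fun l => if l ∈ S then φ l else l

/-- `F[l ↦ ⊤]`: delete every clause containing `l` and delete `l̄` from every
remaining clause. -/
def CNF.assignTrue (F : CNF V) (l : Lit V) : CNF V :=
  Finset.image (fun C => Finset.erase C (Lit.negate l)) (Finset.filter (fun C => l ∉ C) F)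

/-- One application of the pure literal rule: if `l ∈ Lit(F)` and no clause of
`F` contains `l̄`, replace `F` by `F[l ↦ ⊤]`. -/
def PureStep (F F' : CNF V) : Prop :=
  ∃ l : Lit V, l ∈ CNF.lits F ∧ (∀ C ∈ F, Lit.negate l ∉ C) ∧ F' = CNF.assignTrue F l

/-!
Let `F` be a satisfiable formula fixed by the flip `z ↔ z̄`, and let `x` be a variable not in `F`.
In `(x ∨ z) ∧ F` the literal `x` is pure, and the pure rule returns `F`. By invariance `F` has a
model with `z` true, and in it `x` may be set to false; this assignment satisfies `(x ∨ z) ∧ F`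
but not its flipped copy `(x ∨ z̄) ∧ F`. Semantic symmetries preserve models, so the flip is not
one of `(x ∨ z) ∧ F`. It remains to exhibit such an `F` in which no literal is pure.
-/

namespace Lit

theorem var_negate {α : Type} (l : Lit α) : l.negate.var = l.var := by
  cases l <;> rfl

theorem val_congr {α : Type} {σ τ : α → Bool} {l : Lit α} (h : σ l.var = τ l.var) :
    l.val σ = l.val τ := by
  cases l <;> simpa [val, var] using h

/-- The transposition of literals exchanging `v` and `v̄`; for `v = z` it is the symmetry that
fails to lift. -/
def flip (v : V) : Equiv.Perm (Lit V) :=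
  Equiv.swap (.pos v) (.neg v)

theorem flip_involutive (v : V) : Function.Involutive (flip v) :=
  Equiv.swap_apply_self _ _

theorem flip_of_var_ne {v : V} {l : Lit V} (h : l.var ≠ v) : flip v l = l :=
  Equiv.swap_apply_of_ne_of_ne (by rintro rfl; exact h rfl) (by rintro rfl; exact h rfl)

theorem flip_of_var_eq {v : V} {l : Lit V} (h : l.var = v) : flip v l = l.negate := by
  subst h
  cases l
  · exact Equiv.swap_apply_left _ _
  · exact Equiv.swap_apply_right _ _

theorem var_flip (v : V) (l : Lit V) : (flip v l).var = l.var := by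
  by_cases h : l.var = v
  · rw [flip_of_var_eq h, var_negate]
  · rw [flip_of_var_ne h]

theorem flip_negate (v : V) (l : Lit V) : flip v l.negate = (flip v l).negate := by
  by_cases h : l.var = v
  · rw [flip_of_var_eq h, flip_of_var_eq ((var_negate l).trans h)]
  · rw [flip_of_var_ne h, flip_of_var_ne (by rwa [var_negate])]

theorem val_flip (σ : V → Bool) (v : V) (l : Lit V) :
    (flip v l).val σ = l.val (Function.update σ v (!σ v)) := by
  by_cases h : l.var = v
  · rw [flip_of_var_eq h]
    cases l <;> cases h <;> simp [negate, val, var]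
  · rw [flip_of_var_ne h]
    exact val_congr (Function.update_of_ne h _ _).symm

end Lit

namespace CNF

theorem mem_vars {F : CNF V} {v : V} : v ∈ F.vars ↔ ∃ C ∈ F, ∃ l ∈ C, l.var = v := by
  simp [vars, Finset.mem_sup]

theorem mem_lits {F : CNF V} {l : Lit V} : l ∈ F.lits ↔ l.var ∈ F.vars := by
  cases l <;> simp [lits, Lit.var]

theorem var_mem_vars {F : CNF V} {C : Clause V} {l : Lit V} (hC : C ∈ F) (hl : l ∈ C) :
    l.var ∈ F.vars :=
  mem_vars.2 ⟨C, hC, l, hl, rfl⟩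

theorem assignTrue_insert_of_mem {F : CNF V} {C : Clause V} {l : Lit V} (hC : l ∈ C)
    (hF : l.var ∉ F.vars) : (insert C F).assignTrue l = F := by
  have notMem_of_var_eq {D : Clause V} (hD : D ∈ F) {m : Lit V} (hm : m.var = l.var) : m ∉ D :=
    fun hmD => hF (hm ▸ var_mem_vars hD hmD)
  rw [assignTrue, Finset.filter_insert, if_neg (not_not.2 hC),
    Finset.filter_true_of_mem fun D hD => notMem_of_var_eq hD rfl]
  calc F.image (fun D => D.erase l.negate)
      = F.image id := Finset.image_congr fun D hD =>
        Finset.erase_eq_of_notMem (notMem_of_var_eq hD l.var_negate)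
    _ = F := Finset.image_id

theorem pureStep_insert {F : CNF V} {C : Clause V} {l : Lit V} (hC : l ∈ C)
    (hC' : l.negate ∉ C) (hF : l.var ∉ F.vars) : PureStep (insert C F) F := by
  refine ⟨l, mem_lits.2 (var_mem_vars (Finset.mem_insert_self C F) hC), fun D hD => ?_,
    (assignTrue_insert_of_mem hC hF).symm⟩
  rcases Finset.mem_insert.1 hD with rfl | hD
  · exact hC'
  · exact fun hl => hF (l.var_negate ▸ var_mem_vars hD hl)

/-- `σ` is a model of `F`: every clause of `F` contains a literal that `σ` makes true. Semantic
symmetries are refuted through their effect on models. -/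
def Satisfies (F : CNF V) (σ : V → Bool) : Prop :=
  ∀ C ∈ F, ∃ l ∈ C, l.val σ = true

theorem reduce_eq_empty_iff {F : CNF V} {σ : V → Bool} : F.reduce σ = ∅ ↔ F.Satisfies σ := by
  simp [reduce, Satisfies, Finset.filter_eq_empty_iff]

theorem satisfies_insert {σ : V → Bool} {C : Clause V} {F : CNF V} :
    (insert C F).Satisfies σ ↔ (∃ l ∈ C, l.val σ = true) ∧ F.Satisfies σ :=
  Finset.forall_mem_insert _ _ _

theorem Satisfies.congr {σ τ : V → Bool} {F : CNF V} (hσ : F.Satisfies σ)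
    (h : ∀ v ∈ F.vars, σ v = τ v) : F.Satisfies τ := by
  intro C hC
  obtain ⟨l, hl, hval⟩ := hσ C hC
  exact ⟨l, hl, (Lit.val_congr (h _ (var_mem_vars hC hl))).symm.trans hval⟩

theorem satisfies_map_flip {σ : V → Bool} {v : V} {F : CNF V} :
    (F.map (Lit.flip v)).Satisfies σ ↔ F.Satisfies (Function.update σ v (!σ v)) := by
  simp [Satisfies, map, Lit.val_flip]

theorem Satisfies.exists_apply_eq_true {σ : V → Bool} {F : CNF V} (hσ : F.Satisfies σ) {v : V}
    (hflip : F.map (Lit.flip v) = F) : ∃ τ, F.Satisfies τ ∧ τ v = true := by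
  cases hv : σ v
  · refine ⟨Function.update σ v (!σ v), satisfies_map_flip.1 ?_, by simp [hv]⟩
    rwa [hflip]
  · exact ⟨σ, hσ, hv⟩

end CNF

theorem IsSynSym.isSemSym {F : CNF V} {φ : Lit V → Lit V} (h : IsSynSym F φ) : IsSemSym F φ :=
  ⟨h.1, h.2.1, fun σ => by rw [h.2.2]⟩

theorem IsSemSym.satisfies_map_iff {F : CNF V} {φ : Lit V → Lit V} (h : IsSemSym F φ)
    {σ : V → Bool} : (F.map φ).Satisfies σ ↔ F.Satisfies σ := by
  rw [← CNF.reduce_eq_empty_iff, ← CNF.reduce_eq_empty_iff, h.2.2 σ]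

theorem isSynSym_flip {F : CNF V} {v : V} (h : F.map (Lit.flip v) = F) :
    IsSynSym F (Lit.flip v) := by
  have mapsTo : Set.MapsTo (Lit.flip v) F.lits F.lits := fun l hl =>
    CNF.mem_lits.2 ((Lit.var_flip v l).symm ▸ CNF.mem_lits.1 hl)
  have leftInv : Function.LeftInverse (Lit.flip v) (Lit.flip v) := Lit.flip_involutive v
  exact ⟨Set.InvOn.bijOn ⟨leftInv.leftInvOn _, leftInv.leftInvOn _⟩ mapsTo mapsTo,
    fun l _ => Lit.flip_negate v l, h⟩

theorem extendId_lits_flip {F : CNF V} {v : V} (hv : v ∈ F.vars) :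
    extendId F.lits (Lit.flip v) = Lit.flip v := by
  funext l
  refine ite_eq_left_iff.2 fun hl => (Lit.flip_of_var_ne ?_).symm
  rintro rfl
  exact hl (CNF.mem_lits.2 hv)

theorem not_isSemSym_insert_pair_flip {F : CNF V} {x z : V} (hx : x ∉ F.vars) (hxz : x ≠ z)
    (hflip : F.map (Lit.flip z) = F) (hsat : ∃ σ, F.Satisfies σ) :
    ¬ IsSemSym (insert {.pos x, .pos z} F) (Lit.flip z) := by
  intro hsym
  obtain ⟨σ, hσ⟩ := hsat
  obtain ⟨τ, hτ, hτz⟩ := hσ.exists_apply_eq_true hflip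
  let ρ := Function.update τ x false
  have hρx : ρ x = false := Function.update_self ..
  have hρz : ρ z = true := (Function.update_of_ne hxz.symm _ _).trans hτz
  have hρF : F.Satisfies ρ := hτ.congr fun v hv =>
    (Function.update_of_ne (ne_of_mem_of_not_mem hv hx) _ _).symm
  have model : (insert {.pos x, .pos z} F : CNF V).Satisfies ρ :=
    CNF.satisfies_insert.2 ⟨⟨.pos z, by simp, hρz⟩, hρF⟩
  have flippedModel := CNF.satisfies_map_flip.1 (hsym.satisfies_map_iff.2 model)
  simpa [Lit.val, hxz, hρx, hρz] using (CNF.satisfies_insert.1 flippedModel).1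

/-- The paper's formula `F'`, namely `(ȳ ∨ z) ∧ (ȳ ∨ z̄) ∧ (y ∨ b) ∧ (y ∨ a) ∧ (ȳ ∨ ā ∨ b̄)`, with
`y, z, a, b` encoded as `1, 2, 3, 4`; the index `0` is left for `x`. -/
def residualFormula : CNF ℕ :=
  {{.neg 1, .pos 2}, {.neg 1, .neg 2}, {.pos 1, .pos 4}, {.pos 1, .pos 3},
    {.neg 1, .neg 3, .neg 4}}

theorem residualFormula_exists_negate_mem :
    ∀ l ∈ residualFormula.lits, ∃ C ∈ residualFormula, l.negate ∈ C := by
  decide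

theorem residualFormula_map_flip : residualFormula.map (Lit.flip 2) = residualFormula := by
  decide

theorem residualFormula_satisfiable : ∃ σ, residualFormula.Satisfies σ :=
  ⟨fun v => decide (v ≠ 1), by unfold CNF.Satisfies; decide⟩

/-- Exhaustive application of the pure literal rule is not
symmetry-lifting: there are CNF formulas `F, F'` such that `F'` is obtained
from `F` by exhaustively applying the pure rule, and some semantic symmetry of
`F'`, extended by the identity on `Lit(F) ∖ Lit(F')`, is not a semantic
symmetry of `F`. -/
theorem exhaustive_pure_not_symmetry_lifting :
    ∃ F F' : CNF ℕ,
      Relation.ReflTransGen PureStep F F' ∧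
      (¬ ∃ l : Lit ℕ, l ∈ CNF.lits F' ∧ ∀ C ∈ F', Lit.negate l ∉ C) ∧
      ∃ φ : Lit ℕ → Lit ℕ, IsSemSym F' φ ∧
        ¬ IsSemSym F (extendId (CNF.lits F') φ) := by
  have hx : 0 ∉ residualFormula.vars := by decide
  have hz : 2 ∈ residualFormula.vars := by decide
  refine ⟨insert {.pos 0, .pos 2} residualFormula, residualFormula,
    .single (CNF.pureStep_insert (l := .pos 0) (by decide) (by decide) hx), ?_,
    Lit.flip 2, (isSynSym_flip residualFormula_map_flip).isSemSym, ?_⟩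
  · rintro ⟨l, hl, hpure⟩
    obtain ⟨C, hC, hlC⟩ := residualFormula_exists_negate_mem l hl
    exact hpure C hC hlC
  · rw [extendId_lits_flip hz]
    exact not_isSemSym_insert_pair_flip hx (by decide) residualFormula_map_flip
      residualFormula_satisfiable
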